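/- (Mikusiński characterization of integrability.) Let (L, I) be an integral system on a set X. A function f : X → ℝ is I-integrable if and only if there exist sequences (f_n) and (φ_n) in L with |f_n| ≤ φ_n pointwise for every n, Σ_{n=1}^∞ I(φ_n) < ∞, and f(x) = Σ_{n=1}^∞ f_n(x) for every x ∈ X with Σ_{n=1}^∞ φ_n(x) < ∞. Moreover, in that case I¹(f) = Σ_{n=1}^∞ I(f_n) (the series converging absolutely). -/

import Mathlib

open Filter Topology

/-- An integral system on a set `X`: a linear lattice `L` of real-valued functions on `X`
(a vector subspace of `ℝ^X` closed under pointwise max and min) together with a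
preintegral `I` on it (a positive linear functional that is continuous in the sense that
`I fₙ → 0` whenever `fₙ ∈ L` are nonnegative and decrease pointwise to `0`). -/
structure IntegralSystem (X : Type*) where
  L : Set (X → ℝ)
  I : (X → ℝ) → ℝ
  zero_mem : (0 : X → ℝ) ∈ L
  add_mem : ∀ ⦃f g : X → ℝ⦄, f ∈ L → g ∈ L → f + g ∈ L
  smul_mem : ∀ (c : ℝ) ⦃f : X → ℝ⦄, f ∈ L → c • f ∈ L
  sup_mem : ∀ ⦃f g : X → ℝ⦄, f ∈ L → g ∈ L → f ⊔ g ∈ L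
  inf_mem : ∀ ⦃f g : X → ℝ⦄, f ∈ L → g ∈ L → f ⊓ g ∈ L
  I_add : ∀ ⦃f g : X → ℝ⦄, f ∈ L → g ∈ L → I (f + g) = I f + I g
  I_smul : ∀ (c : ℝ) ⦃f : X → ℝ⦄, f ∈ L → I (c • f) = c * I f
  I_pos : ∀ ⦃f : X → ℝ⦄, f ∈ L → (∀ x, 0 ≤ f x) → 0 ≤ I f
  I_cont : ∀ f : ℕ → X → ℝ, (∀ n, f n ∈ L) → (∀ n x, 0 ≤ f n x) →
    (∀ n x, f (n + 1) x ≤ f n x) →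
    (∀ x, Tendsto (fun n => f n x) atTop (𝓝 0)) →
    Tendsto (fun n => I (f n)) atTop (𝓝 0)

variable {X : Type*}

/-- `f : X → (−∞,∞]` belongs to `L_↑` iff some sequence in `L` increases pointwise to `f`. -/
def MemLup (S : IntegralSystem X) (f : X → EReal) : Prop :=
  ∃ g : ℕ → X → ℝ, (∀ n, g n ∈ S.L) ∧ (∀ n x, g n x ≤ g (n + 1) x) ∧
    ∀ x, Tendsto (fun n => ((g n x : EReal))) atTop (𝓝 (f x))

/-- For `f ∈ L_↑`, `I_↑ f = lim I (g n)` for any sequence `(g n)` in `L` increasing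
pointwise to `f`; the value does not depend on the chosen sequence, so we may define it as
the supremum of all such limits. -/
noncomputable def Iup (S : IntegralSystem X) (f : X → EReal) : EReal :=
  sSup { c : EReal | ∃ g : ℕ → X → ℝ, (∀ n, g n ∈ S.L) ∧ (∀ n x, g n x ≤ g (n + 1) x) ∧
    (∀ x, Tendsto (fun n => ((g n x : EReal))) atTop (𝓝 (f x))) ∧
    Tendsto (fun n => ((S.I (g n) : EReal))) atTop (𝓝 c) }

/-- `L_↓ = −L_↑`. -/
def MemLdown (S : IntegralSystem X) (f : X → EReal) : Prop :=
  MemLup S (fun x => -(f x))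

/-- `I_↓ f = −I_↑(−f)`. -/
noncomputable def Idown (S : IntegralSystem X) (f : X → EReal) : EReal :=
  -(Iup S (fun x => -(f x)))

/-- The upper integral `Ī f = inf { I_↑ g : g ∈ L_↑, f ≤ g }` (with `inf ∅ = ∞`). -/
noncomputable def upperInt (S : IntegralSystem X) (f : X → EReal) : EReal :=
  sInf (Iup S '' { g | MemLup S g ∧ ∀ x, f x ≤ g x })

/-- The lower integral `I̲ f = sup { I_↓ g : g ∈ L_↓, g ≤ f }` (with `sup ∅ = −∞`). -/
noncomputable def lowerInt (S : IntegralSystem X) (f : X → EReal) : EReal :=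
  sSup (Idown S '' { g | MemLdown S g ∧ ∀ x, g x ≤ f x })

/-- `f : X → ℝ` is `I`-integrable iff its lower and upper integrals coincide and are finite. -/
def Integrable1 (S : IntegralSystem X) (f : X → ℝ) : Prop :=
  ∃ c : ℝ, lowerInt S (fun x => ((f x : EReal))) = (c : EReal) ∧
    upperInt S (fun x => ((f x : EReal))) = (c : EReal)

/-- The Daniell extension `I¹` of `I`: the common value of the lower and upper integrals of
an integrable function. -/
noncomputable def Int1 (S : IntegralSystem X) (f : X → ℝ) : ℝ :=
  (upperInt S (fun x => ((f x : EReal)))).toReal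

/-!
Call `C` an upper bound of `f` when `f` lies below the limit of an increasing sequence in `L` whose
integrals stay below `C`; continuity of `I` makes this an upper bound of `I f` when `f ∈ L`.
A nonnegative function has upper bound `C` exactly when it lies below a series of nonnegative
functions of `L` with total integral at most `C`, wherever that series converges. Two consequences:

* if `∑ fₙ` represents `f` with majorants `φₙ`, then `∑_{n ≥ N} I φₙ` is an upper bound of
  `|f - ∑_{n < N} fₙ|`, so both the upper and the lower integral of `f` equal `∑ I fₙ`;
* if `f` is integrable, pick `uₖ ∈ L` such that `2⁻ᵏ` is an upper bound of `|f - uₖ|`, and let `fₙ`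
  be the successive differences of `(uₖ)`. The majorants are `φₙ = |fₙ| + ψₙ`, where the series
  `∑ ψₙ` dominates `∑ₖ |f - uₖ|`: where it converges, `uₖ → f`.
-/

/-- The successive differences `a 0, a 1 - a 0, a 2 - a 1, …` of a sequence, i.e. the terms of the
series whose partial sums are the `a n`. -/
def backwardDiff {E : Type*} [Sub E] (a : ℕ → E) : ℕ → E
  | 0 => a 0
  | n + 1 => a (n + 1) - a n

theorem sum_range_succ_backwardDiff {E : Type*} [AddCommGroup E] (a : ℕ → E) (n : ℕ) :
    ∑ i ∈ Finset.range (n + 1), backwardDiff a i = a n := by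
  induction n with
  | zero => simp [backwardDiff]
  | succ n ih => rw [Finset.sum_range_succ, ih, backwardDiff, add_sub_cancel]

theorem backwardDiff_nonneg {E : Type*} [AddCommGroup E] [PartialOrder E] [IsOrderedAddMonoid E]
    {a : ℕ → E} (ha : Monotone a) (h0 : 0 ≤ a 0) : ∀ n, 0 ≤ backwardDiff a n
  | 0 => h0
  | n + 1 => sub_nonneg.2 (ha n.le_succ)

/-- `f ≤ liminf g n` pointwise, phrased without extended real values. -/
def DominatedInLimit (f : X → ℝ) (g : ℕ → X → ℝ) : Prop :=
  ∀ x, ∀ y < f x, ∀ᶠ n in atTop, y < g n x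

namespace DominatedInLimit

variable {f f' : X → ℝ} {g g' : ℕ → X → ℝ}

theorem of_le (h : ∀ n, f ≤ g n) : DominatedInLimit f g :=
  fun x _ hy => .of_forall fun n => hy.trans_le (h n x)

theorem mono_left (hf : DominatedInLimit f g) (h : f' ≤ f) : DominatedInLimit f' g :=
  fun x y hy => hf x y (hy.trans_le (h x))

theorem add (hf : DominatedInLimit f g) (hf' : DominatedInLimit f' g') :
    DominatedInLimit (f + f') (g + g') := by
  intro x y hy
  obtain ⟨z, hz, hz'⟩ : ∃ z < f x, y - f' x < z := by
    simpa [and_comm] using exists_between (sub_lt_iff_lt_add.2 hy)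
  filter_upwards [hf x z hz, hf' x (y - z) (by linarith)] with n hn hn'
  simpa using add_lt_add hn hn'

theorem iff_le_iSup (hg : Monotone g) :
    DominatedInLimit f g ↔ ∀ x, (f x : EReal) ≤ ⨆ n, (g n x : EReal) := by
  refine forall_congr' fun x => ⟨fun h => ?_, fun h y hy => ?_⟩
  · refine EReal.ge_of_forall_gt_iff_ge.1 fun y hy => ?_
    obtain ⟨n, hn⟩ := (h y (EReal.coe_lt_coe_iff.1 hy)).exists
    exact (EReal.coe_le_coe_iff.2 hn.le).trans (le_iSup (fun n => (g n x : EReal)) n)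
  · obtain ⟨n, hn⟩ := lt_iSup_iff.1 ((EReal.coe_lt_coe_iff.2 hy).trans_le h)
    filter_upwards [eventually_ge_atTop n] with m hm
    exact (EReal.coe_lt_coe_iff.1 hn).trans_le (hg hm x)

end DominatedInLimit

namespace IntegralSystem

variable (S : IntegralSystem X)

/-- The linear lattice of an integral system as a subspace of `X → ℝ`. -/
def submodule : Submodule ℝ (X → ℝ) where
  carrier := S.L
  zero_mem' := S.zero_mem
  add_mem' hf hg := S.add_mem hf hg
  smul_mem' c _ hf := S.smul_mem c hf

/-- The preintegral as a linear functional on the linear lattice. -/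
def preintegral : S.submodule →ₗ[ℝ] ℝ where
  toFun f := S.I f
  map_add' f g := S.I_add f.2 g.2
  map_smul' c f := S.I_smul c f.2

variable {S} {f g u φ : X → ℝ} {c C D : ℝ}

theorem neg_mem (hf : f ∈ S.L) : -f ∈ S.L :=
  S.submodule.neg_mem hf

theorem sub_mem (hf : f ∈ S.L) (hg : g ∈ S.L) : f - g ∈ S.L :=
  S.submodule.sub_mem hf hg

theorem sum_mem {ι : Type*} {f : ι → X → ℝ} (hf : ∀ i, f i ∈ S.L) (s : Finset ι) :
    ∑ i ∈ s, f i ∈ S.L :=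
  S.submodule.sum_mem fun i _ => hf i

theorem abs_mem (hf : f ∈ S.L) : |f| ∈ S.L :=
  S.sup_mem hf (neg_mem hf)

theorem backwardDiff_mem {a : ℕ → X → ℝ} (ha : ∀ n, a n ∈ S.L) : ∀ n, backwardDiff a n ∈ S.L
  | 0 => ha 0
  | n + 1 => sub_mem (ha (n + 1)) (ha n)

theorem I_zero : S.I 0 = 0 :=
  map_zero S.preintegral

theorem I_neg (hf : f ∈ S.L) : S.I (-f) = -S.I f :=
  map_neg S.preintegral ⟨f, hf⟩

theorem I_sub (hf : f ∈ S.L) (hg : g ∈ S.L) : S.I (f - g) = S.I f - S.I g :=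
  map_sub S.preintegral ⟨f, hf⟩ ⟨g, hg⟩

theorem I_sum {ι : Type*} {f : ι → X → ℝ} (hf : ∀ i, f i ∈ S.L) (s : Finset ι) :
    S.I (∑ i ∈ s, f i) = ∑ i ∈ s, S.I (f i) := by
  simpa only [preintegral, LinearMap.coe_mk, AddHom.coe_mk, Submodule.coe_sum] using
    map_sum S.preintegral (fun i => ⟨f i, hf i⟩) s

theorem I_mono (hf : f ∈ S.L) (hg : g ∈ S.L) (h : f ≤ g) : S.I f ≤ S.I g := by
  rw [← sub_nonneg, ← I_sub hg hf]
  exact S.I_pos (sub_mem hg hf) fun x => sub_nonneg.2 (h x)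

theorem abs_I_le (hf : f ∈ S.L) (hφ : φ ∈ S.L) (h : |f| ≤ φ) : |S.I f| ≤ S.I φ := by
  refine abs_le'.2 ⟨I_mono hf hφ ((le_abs_self f).trans h), ?_⟩
  rw [← I_neg hf]
  exact I_mono (neg_mem hf) hφ ((neg_le_abs f).trans h)

/-- `C` is an upper bound of the integral of `f`: some increasing sequence in `L` has a limit that
dominates `f`, and integrals that do not exceed `C`. -/
def HasUpperBound (S : IntegralSystem X) (f : X → ℝ) (C : ℝ) : Prop :=
  ∃ g : ℕ → X → ℝ, (∀ n, g n ∈ S.L) ∧ Monotone g ∧ DominatedInLimit f g ∧ ∀ n, S.I (g n) ≤ C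

namespace HasUpperBound

theorem of_mem (hu : u ∈ S.L) : S.HasUpperBound u (S.I u) :=
  ⟨fun _ => u, fun _ => hu, monotone_const, .of_le fun _ => le_rfl, fun _ => le_rfl⟩

theorem mono (hf : S.HasUpperBound f C) (hgf : g ≤ f) (hCD : C ≤ D) : S.HasUpperBound g D := by
  obtain ⟨v, hv, hmono, hdom, hI⟩ := hf
  exact ⟨v, hv, hmono, hdom.mono_left hgf, fun n => (hI n).trans hCD⟩

theorem add (hf : S.HasUpperBound f C) (hg : S.HasUpperBound g D) :
    S.HasUpperBound (f + g) (C + D) := by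
  obtain ⟨v, hv, hvmono, hvdom, hvI⟩ := hf
  obtain ⟨w, hw, hwmono, hwdom, hwI⟩ := hg
  refine ⟨v + w, fun n => S.add_mem (hv n) (hw n), hvmono.add hwmono, hvdom.add hwdom, fun n => ?_⟩
  rw [Pi.add_apply, S.I_add (hv n) (hw n)]
  exact add_le_add (hvI n) (hwI n)

/-- The functions `(u - g n)⁺` decrease to `0`, so that their integrals, which are at least
`I u - C`, tend to `0`. -/
theorem I_le (h : S.HasUpperBound u C) (hu : u ∈ S.L) : S.I u ≤ C := by
  obtain ⟨g, hg, hmono, hdom, hI⟩ := h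
  have hmem n : (u - g n) ⊔ 0 ∈ S.L := S.sup_mem (sub_mem hu (hg n)) S.zero_mem
  have hlim : Tendsto (fun n => S.I ((u - g n) ⊔ 0)) atTop (𝓝 0) := by
    refine S.I_cont _ hmem (fun n x => le_sup_right)
      (fun n x => sup_le_sup_right (sub_le_sub_left (hmono n.le_succ x) _) _) fun x => ?_
    refine tendsto_order.2
      ⟨fun y hy => .of_forall fun n => hy.trans_le le_sup_right, fun y hy => ?_⟩
    filter_upwards [hdom x (u x - y) (sub_lt_self _ hy)] with n hn
    exact max_lt (sub_lt_comm.1 hn) hy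
  have hle n : S.I u - C ≤ S.I ((u - g n) ⊔ 0) :=
    calc S.I u - C ≤ S.I u - S.I (g n) := sub_le_sub_left (hI n) _
      _ = S.I (u - g n) := (I_sub hu (hg n)).symm
      _ ≤ S.I ((u - g n) ⊔ 0) := I_mono (sub_mem hu (hg n)) (hmem n) le_sup_left
  exact sub_nonpos.1 (ge_of_tendsto' hlim hle)

theorem add_nonneg_of_neg (hf : S.HasUpperBound f C) (hf' : S.HasUpperBound (-f) D) :
    0 ≤ C + D := by
  have h := hf.add hf'
  rw [add_neg_cancel] at h
  exact I_zero.symm.trans_le (h.I_le S.zero_mem)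

theorem of_series {p : ℕ → X → ℝ} (hp : ∀ n, p n ∈ S.L) (hp0 : ∀ n, 0 ≤ p n)
    (hI : ∀ n, ∑ i ∈ Finset.range n, S.I (p i) ≤ C)
    (hf : ∀ x, Summable (fun n => p n x) → f x ≤ ∑' n, p n x) : S.HasUpperBound f C := by
  refine ⟨fun n => ∑ i ∈ Finset.range n, p i, fun n => sum_mem hp _,
    monotone_nat_of_le_succ fun n => ?_, fun x y hy => ?_, fun n => (I_sum hp _).trans_le (hI n)⟩
  · rw [Finset.sum_range_succ]
    exact le_add_of_nonneg_right (hp0 n)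
  · simp only [Finset.sum_apply]
    by_cases hx : Summable fun n => p n x
    · exact hx.hasSum.tendsto_sum_nat.eventually_const_lt (hy.trans_le (hf x hx))
    · have hlim := (not_summable_iff_tendsto_nat_atTop_of_nonneg fun n => hp0 n x).1 hx
      exact hlim.eventually_gt_atTop y

theorem exists_nonneg_seq (hf : S.HasUpperBound f C) (hf0 : 0 ≤ f) :
    ∃ g : ℕ → X → ℝ, (∀ n, g n ∈ S.L) ∧ Monotone g ∧ (∀ n, 0 ≤ g n) ∧ DominatedInLimit f g ∧
      ∀ n, S.I (g n) ≤ C := by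
  obtain ⟨g, hg, hmono, hdom, hI⟩ := hf
  have hsup n : DominatedInLimit (g n ⊔ 0) g := fun x y hy => by
    rcases lt_sup_iff.1 hy with hyg | hy0
    · filter_upwards [eventually_ge_atTop n] with m hm
      exact hyg.trans_le (hmono hm x)
    · exact hdom x y (hy0.trans_le (hf0 x))
  have hmem n : g n ⊔ 0 ∈ S.L := S.sup_mem (hg n) S.zero_mem
  refine ⟨fun n => g n ⊔ 0, hmem, fun m n hmn => sup_le_sup_right (hmono hmn) 0,
    fun n => le_sup_right, fun x y hy => ?_, fun n => I_le ⟨g, hg, hmono, hsup n, hI⟩ (hmem n)⟩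
  exact (hdom x y hy).mono fun n hn => hn.trans_le le_sup_left

theorem exists_series (hf : S.HasUpperBound f C) (hf0 : 0 ≤ f) :
    ∃ p : ℕ → X → ℝ, (∀ n, p n ∈ S.L) ∧ (∀ n, 0 ≤ p n) ∧
      (∀ n, ∑ i ∈ Finset.range n, S.I (p i) ≤ C) ∧
      ∀ x, Summable (fun n => p n x) → f x ≤ ∑' n, p n x := by
  obtain ⟨g, hg, hmono, hg0, hdom, hI⟩ := hf.exists_nonneg_seq hf0
  have hp := backwardDiff_mem hg
  have hp0 := backwardDiff_nonneg hmono (hg0 0)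
  refine ⟨backwardDiff g, hp, hp0, fun n => ?_, fun x hx => le_of_forall_lt fun y hy => ?_⟩
  · calc ∑ i ∈ Finset.range n, S.I (backwardDiff g i)
        ≤ ∑ i ∈ Finset.range (n + 1), S.I (backwardDiff g i) :=
          Finset.sum_le_sum_of_subset_of_nonneg (Finset.range_mono n.le_succ)
            fun i _ _ => S.I_pos (hp i) (hp0 i)
      _ = S.I (g n) := by rw [← I_sum hp, sum_range_succ_backwardDiff]
      _ ≤ C := hI n
  · obtain ⟨n, hn⟩ := (hdom x y hy).exists
    calc y < g n x := hn
      _ = ∑ i ∈ Finset.range (n + 1), backwardDiff g i x := by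
          rw [← Finset.sum_apply, sum_range_succ_backwardDiff]
      _ ≤ ∑' i, backwardDiff g i x := hx.sum_le_tsum _ fun i _ => hp0 i x

theorem exists_series_dominating {h : ℕ → X → ℝ} {C : ℕ → ℝ}
    (hh : ∀ k, S.HasUpperBound (h k) (C k)) (hh0 : ∀ k, 0 ≤ h k) (hC : Summable C) :
    ∃ ψ : ℕ → X → ℝ, (∀ n, ψ n ∈ S.L) ∧ (∀ n, 0 ≤ ψ n) ∧ Summable (fun n => S.I (ψ n)) ∧
      ∀ x, Summable (fun n => ψ n x) → Summable fun k => h k x := by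
  choose p hp hp0 hpI hdom using fun k => (hh k).exists_series (hh0 k)
  have hIp0 k i : 0 ≤ S.I (p k i) := S.I_pos (hp k i) (hp0 k i)
  have hpair {q : ℕ → ℕ → ℝ} :
      Summable (fun n : ℕ => q n.unpair.1 n.unpair.2) ↔ Summable fun k : ℕ × ℕ => q k.1 k.2 :=
    Nat.pairEquiv.symm.summable_iff (f := fun k : ℕ × ℕ => q k.1 k.2)
  refine ⟨fun n => p n.unpair.1 n.unpair.2, fun n => hp _ _, fun n => hp0 _ _,
    (hpair (q := fun k i => S.I (p k i))).2 ?_, fun x hx => ?_⟩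
  · refine (summable_prod_of_nonneg fun k => hIp0 k.1 k.2).2
      ⟨fun k => summable_of_sum_range_le (hIp0 k) (hpI k), ?_⟩
    exact hC.of_nonneg_of_le (fun k => tsum_nonneg (hIp0 k))
      fun k => Real.tsum_le_of_sum_range_le (hIp0 k) (hpI k)
  · have hx' := (hpair (q := fun k i => p k i x)).1 hx
    exact hx'.prod.of_nonneg_of_le (fun k => hh0 k x) fun k => hdom k x (hx'.prod_factor k)

end HasUpperBound

theorem Iup_iSup_le {g : ℕ → X → ℝ} (hg : ∀ n, g n ∈ S.L) (hmono : Monotone g)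
    (hI : ∀ n, S.I (g n) ≤ C) : Iup S (fun x => ⨆ n, (g n x : EReal)) ≤ C := by
  refine sSup_le ?_
  rintro _ ⟨v, hv, hvmono, hvlim, hvI⟩
  refine le_of_tendsto' hvI fun n => EReal.coe_le_coe_iff.2 ?_
  have hdom : DominatedInLimit (v n) g := (DominatedInLimit.iff_le_iSup hmono).2 fun x =>
    (monotone_nat_of_le_succ fun k => EReal.coe_le_coe_iff.2 (hvmono k x)).ge_of_tendsto (hvlim x) n
  exact HasUpperBound.I_le ⟨g, hg, hmono, hdom, hI⟩ (hv n)

theorem upperInt_le (hf : S.HasUpperBound f C) : upperInt S (fun x => (f x : EReal)) ≤ C := by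
  obtain ⟨g, hg, hmono, hdom, hI⟩ := hf
  have hlim x : Tendsto (fun n => (g n x : EReal)) atTop (𝓝 (⨆ n, (g n x : EReal))) :=
    tendsto_atTop_iSup fun m n hmn => EReal.coe_le_coe_iff.2 (hmono hmn x)
  have hmem : MemLup S (fun x => ⨆ n, (g n x : EReal)) :=
    ⟨g, hg, fun n x => hmono n.le_succ x, hlim⟩
  exact sInf_le_of_le ⟨_, ⟨hmem, (DominatedInLimit.iff_le_iSup hmono).1 hdom⟩, rfl⟩
    (Iup_iSup_le hg hmono hI)

theorem hasUpperBound_of_upperInt_lt (h : upperInt S (fun x => (f x : EReal)) < C) :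
    S.HasUpperBound f C := by
  obtain ⟨_, ⟨G, ⟨⟨g, hg, hgmono, hlim⟩, hfG⟩, rfl⟩, hlt⟩ := sInf_lt_iff.1 h
  have hmono : Monotone g := monotone_nat_of_le_succ hgmono
  have hG x : ⨆ n, (g n x : EReal) = G x :=
    iSup_eq_of_tendsto (fun m n hmn => EReal.coe_le_coe_iff.2 (hmono hmn x)) (hlim x)
  have hImono : Monotone fun n => (S.I (g n) : EReal) :=
    fun m n hmn => EReal.coe_le_coe_iff.2 (I_mono (hg m) (hg n) (hmono hmn))
  refine ⟨g, hg, hmono,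
    (DominatedInLimit.iff_le_iSup hmono).2 fun x => (hfG x).trans_eq (hG x).symm, fun n => ?_⟩
  refine EReal.coe_le_coe_iff.1 ?_
  calc (S.I (g n) : EReal) ≤ ⨆ n, (S.I (g n) : EReal) := le_iSup (fun n => (S.I (g n) : EReal)) n
    _ ≤ Iup S G := le_sSup ⟨g, hg, hgmono, hlim, tendsto_atTop_iSup hImono⟩
    _ ≤ C := hlt.le

theorem upperInt_le_coe_iff :
    upperInt S (fun x => (f x : EReal)) ≤ c ↔ ∀ C > c, S.HasUpperBound f C :=
  ⟨fun h _ hC => hasUpperBound_of_upperInt_lt (h.trans_lt (EReal.coe_lt_coe_iff.2 hC)),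
    fun h => EReal.le_of_forall_lt_iff_le.1 fun C hC =>
      upperInt_le (h C (EReal.coe_lt_coe_iff.1 hC))⟩

theorem lowerInt_eq_neg_upperInt_neg (S : IntegralSystem X) (f : X → EReal) :
    lowerInt S f = -upperInt S fun x => -f x := by
  refine le_antisymm (sSup_le ?_) (EReal.neg_le.2 (le_sInf ?_))
  · rintro _ ⟨g, ⟨hg, hgf⟩, rfl⟩
    exact EReal.neg_le_neg_iff.2 (sInf_le ⟨_, ⟨hg, fun x => EReal.neg_le_neg_iff.2 (hgf x)⟩, rfl⟩)
  · rintro _ ⟨g, ⟨hg, hfg⟩, rfl⟩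
    refine EReal.neg_le.2 (le_sSup ⟨fun x => -g x, ⟨?_, fun x => EReal.neg_le.1 (hfg x)⟩, ?_⟩)
    · simpa only [MemLdown, neg_neg] using hg
    · simp only [Idown, neg_neg]

/-- `c` is the integral of `f`, in terms of upper bounds: the upper bounds of `f` come arbitrarily
close to `c`, and those of `-f` arbitrarily close to `-c`. -/
def HasIntegral (S : IntegralSystem X) (f : X → ℝ) (c : ℝ) : Prop :=
  (∀ C > c, S.HasUpperBound f C) ∧ ∀ C > -c, S.HasUpperBound (-f) C

namespace HasIntegral

theorem neg (h : S.HasIntegral f c) : S.HasIntegral (-f) (-c) := by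
  simpa only [HasIntegral, neg_neg] using h.symm

theorem le_of_hasUpperBound (h : S.HasIntegral f c) (hC : S.HasUpperBound f C) : c ≤ C := by
  refine le_of_forall_pos_le_add fun ε hε => ?_
  linarith [hC.add_nonneg_of_neg (h.2 (-c + ε) (by linarith))]

theorem upperInt_eq (h : S.HasIntegral f c) : upperInt S (fun x => (f x : EReal)) = c := by
  refine le_antisymm (upperInt_le_coe_iff.2 h.1) (EReal.le_of_forall_lt_iff_le.1 fun C hC => ?_)
  exact EReal.coe_le_coe_iff.2 (h.le_of_hasUpperBound (hasUpperBound_of_upperInt_lt hC))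

theorem lowerInt_eq (h : S.HasIntegral f c) : lowerInt S (fun x => (f x : EReal)) = c := by
  have hneg := h.neg.upperInt_eq
  simp only [Pi.neg_apply, EReal.coe_neg] at hneg
  rw [lowerInt_eq_neg_upperInt_neg, hneg, neg_neg]

theorem int1_eq (h : S.HasIntegral f c) : Int1 S f = c := by
  rw [Int1, h.upperInt_eq, EReal.toReal_coe]

theorem of_tendsto {u : ℕ → X → ℝ} {δ : ℕ → ℝ} (hu : ∀ n, u n ∈ S.L)
    (hfu : ∀ n, S.HasUpperBound |f - u n| (δ n)) (hδ : Tendsto δ atTop (𝓝 0))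
    (hI : Tendsto (fun n => S.I (u n)) atTop (𝓝 c)) : S.HasIntegral f c := by
  refine ⟨fun C hC => ?_, fun C hC => ?_⟩
  · have hlim : Tendsto (fun n => δ n + S.I (u n)) atTop (𝓝 c) := by simpa using hδ.add hI
    obtain ⟨n, hn⟩ := (hlim.eventually_lt_const hC).exists
    refine ((hfu n).add (.of_mem (hu n))).mono ?_ hn.le
    exact sub_le_iff_le_add.1 (le_abs_self (f - u n))
  · have hlim : Tendsto (fun n => δ n + S.I (-u n)) atTop (𝓝 (-c)) := by
      simpa only [I_neg (hu _), zero_add] using hδ.add hI.neg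
    obtain ⟨n, hn⟩ := (hlim.eventually_lt_const hC).exists
    refine ((hfu n).add (.of_mem (neg_mem (hu n)))).mono ?_ hn.le
    calc -f = -(f - u n) + -u n := by abel
      _ ≤ |f - u n| + -u n := add_le_add_left (neg_le_abs _) _

end HasIntegral

theorem integrable1_iff_exists_hasIntegral : Integrable1 S f ↔ ∃ c, S.HasIntegral f c := by
  refine exists_congr fun c => ⟨fun ⟨hlower, hupper⟩ => ⟨upperInt_le_coe_iff.1 hupper.le, ?_⟩,
    fun h => ⟨h.lowerInt_eq, h.upperInt_eq⟩⟩
  refine upperInt_le_coe_iff.1 (le_of_eq ?_)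
  rw [lowerInt_eq_neg_upperInt_neg, neg_eq_iff_eq_neg] at hlower
  simpa only [Pi.neg_apply, EReal.coe_neg] using hlower

theorem HasIntegral.exists_hasUpperBound_posPart_sub (h : S.HasIntegral f c) {ε : ℝ} (hε : 0 < ε) :
    ∃ u ∈ S.L, S.I u ≤ c + ε ∧ S.HasUpperBound (f - u)⁺ (2 * ε) := by
  obtain ⟨g, hg, hmono, hdom, hI⟩ := h.1 (c + ε) (lt_add_of_pos_right c hε)
  obtain ⟨m, hm⟩ : ∃ m, c - ε < S.I (g m) := by
    by_contra! hle
    linarith [h.le_of_hasUpperBound ⟨g, hg, hmono, hdom, hle⟩]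
  refine ⟨g m, hg m, hI m, fun n => g (n + m) - g m, fun n => sub_mem (hg _) (hg m),
    fun i j hij => sub_le_sub_right (hmono (by lia)) _, fun x y hy => ?_, fun n => ?_⟩
  · have hge n : 0 ≤ g (n + m) x - g m x := sub_nonneg.2 (hmono (Nat.le_add_left m n) x)
    rcases lt_sup_iff.1 hy with hyf | hy0
    · have hdom' := hdom x (y + g m x) (lt_sub_iff_add_lt.1 hyf)
      filter_upwards [(tendsto_add_atTop_nat m).eventually hdom'] with n hn
      exact lt_sub_iff_add_lt.2 hn
    · exact .of_forall fun n => lt_of_lt_of_le hy0 (hge n)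
  · rw [I_sub (hg _) (hg m)]
    linarith [hI (n + m)]

theorem HasIntegral.exists_hasUpperBound_abs_sub (h : S.HasIntegral f c) {ε : ℝ} (hε : 0 < ε) :
    ∃ u ∈ S.L, S.HasUpperBound |f - u| ε := by
  obtain ⟨u, hu, hIu, hpos⟩ := h.exists_hasUpperBound_posPart_sub (ε := ε / 6) (by positivity)
  have hneg := (HasUpperBound.of_mem hu).add (h.2 (-c + ε / 6) (by linarith))
  refine ⟨u, hu, ((hpos.add hpos).add hneg).mono (le_of_eq ?_) (by linarith)⟩
  rw [← two_nsmul, ← abs_add_eq_two_nsmul_posPart]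
  abel

/-- `∑ fn` is a series representation of `f` in the sense of Mikusiński, with majorants `φn`: it
converges to `f` wherever `∑ φn` converges, and the `φn` have summable integrals. -/
structure IsMikusinskiSeries (S : IntegralSystem X) (f : X → ℝ) (fn φn : ℕ → X → ℝ) : Prop where
  mem : ∀ n, fn n ∈ S.L
  majorant_mem : ∀ n, φn n ∈ S.L
  abs_le_majorant : ∀ n x, |fn n x| ≤ φn n x
  summable_I_majorant : Summable fun n => S.I (φn n)
  hasSum : ∀ x, Summable (fun n => φn n x) → HasSum (fun n => fn n x) (f x)

namespace IsMikusinskiSeries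

variable {fn φn : ℕ → X → ℝ}

theorem majorant_nonneg (h : S.IsMikusinskiSeries f fn φn) (n : ℕ) : 0 ≤ φn n :=
  fun x => (abs_nonneg _).trans (h.abs_le_majorant n x)

theorem summable_abs_I (h : S.IsMikusinskiSeries f fn φn) : Summable fun n => |S.I (fn n)| :=
  h.summable_I_majorant.of_nonneg_of_le (fun _ => abs_nonneg _)
    fun n => abs_I_le (h.mem n) (h.majorant_mem n) (h.abs_le_majorant n)

theorem hasUpperBound_abs_sub_sum (h : S.IsMikusinskiSeries f fn φn) (N : ℕ) :
    S.HasUpperBound |f - ∑ i ∈ Finset.range N, fn i| (∑' i, S.I (φn (i + N))) := by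
  refine .of_series (p := fun i => φn (i + N)) (fun i => h.majorant_mem _)
    (fun i => h.majorant_nonneg _) (fun n => ?_) fun x hx => ?_
  · exact ((summable_nat_add_iff N).2 h.summable_I_majorant).sum_le_tsum _
      fun i _ => S.I_pos (h.majorant_mem _) (h.majorant_nonneg _)
  · have hf := h.hasSum x ((summable_nat_add_iff (f := fun i => φn i x) N).1 hx)
    simpa using ((hasSum_nat_add_iff' N).2 hf).norm_le_of_bounded hx.hasSum
      fun i => h.abs_le_majorant (i + N) x

theorem hasIntegral (h : S.IsMikusinskiSeries f fn φn) : S.HasIntegral f (∑' n, S.I (fn n)) := by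
  refine .of_tendsto (sum_mem h.mem <| Finset.range ·) h.hasUpperBound_abs_sub_sum
    (tendsto_sum_nat_add fun n => S.I (φn n)) ?_
  simpa only [I_sum h.mem] using h.summable_abs_I.of_abs.hasSum.tendsto_sum_nat

end IsMikusinskiSeries

theorem summable_I_abs_backwardDiff {u : ℕ → X → ℝ} {C : ℕ → ℝ} (hu : ∀ n, u n ∈ S.L)
    (hfu : ∀ n, S.HasUpperBound |f - u n| (C n)) (hC : Summable C) :
    Summable fun n => S.I |backwardDiff u n| := by
  have hmem n := abs_mem (backwardDiff_mem hu n)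
  refine (summable_nat_add_iff 1).1 ((hC.add ((summable_nat_add_iff 1).2 hC)).of_nonneg_of_le
    (fun n => S.I_pos (hmem _) (abs_nonneg (backwardDiff u _))) fun n => ?_)
  refine (((hfu n).add (hfu (n + 1))).mono (fun x => ?_) le_rfl).I_le (hmem _)
  calc |u (n + 1) x - u n x| = |f x - u n x - (f x - u (n + 1) x)| := by
        rw [sub_sub_sub_cancel_left]
    _ ≤ |f x - u n x| + |f x - u (n + 1) x| := abs_sub _ _

theorem exists_isMikusinskiSeries_backwardDiff {u : ℕ → X → ℝ} {C : ℕ → ℝ} (hu : ∀ n, u n ∈ S.L)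
    (hfu : ∀ n, S.HasUpperBound |f - u n| (C n)) (hC : Summable C) :
    ∃ φn, S.IsMikusinskiSeries f (backwardDiff u) φn := by
  obtain ⟨ψ, hψ, hψ0, hIψ, hdom⟩ :=
    HasUpperBound.exists_series_dominating hfu (fun n => abs_nonneg (f - u n)) hC
  have hmem := backwardDiff_mem hu
  have hle n x : |backwardDiff u n x| ≤ |backwardDiff u n x| + ψ n x :=
    le_add_of_nonneg_right (hψ0 n x)
  refine ⟨fun n => |backwardDiff u n| + ψ n, hmem, fun n => S.add_mem (abs_mem (hmem n)) (hψ n),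
    hle, ?_, fun x hx => ?_⟩
  · simpa only [S.I_add (abs_mem (hmem _)) (hψ _)] using
      (summable_I_abs_backwardDiff hu hfu hC).add hIψ
  · have hψx : Summable fun n => ψ n x :=
      hx.of_nonneg_of_le (fun n => hψ0 n x) fun n => le_add_of_nonneg_left (abs_nonneg _)
    have hlim : Tendsto (fun n => u n x) atTop (𝓝 (f x)) := by
      simpa using (tendsto_const_nhds (x := f x)).sub (hdom x hψx).of_abs.tendsto_atTop_zero
    have hsum : Summable fun n => backwardDiff u n x :=
      (hx.of_nonneg_of_le (fun n => abs_nonneg _) fun n => hle n x).of_abs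
    rw [hsum.hasSum_iff_tendsto_nat, ← tendsto_add_atTop_iff_nat 1]
    simpa only [← Finset.sum_apply, sum_range_succ_backwardDiff] using hlim

theorem HasIntegral.exists_isMikusinskiSeries (h : S.HasIntegral f c) :
    ∃ fn φn, S.IsMikusinskiSeries f fn φn := by
  choose u hu hfu using fun n : ℕ =>
    h.exists_hasUpperBound_abs_sub (ε := (1 / 2 : ℝ) ^ n) (by positivity)
  exact ⟨_, exists_isMikusinskiSeries_backwardDiff hu hfu summable_geometric_two⟩

end IntegralSystem

/-- Mikusiński's characterization of integrability: `f : X → ℝ` is `I`-integrable iff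
there are sequences `(fn)` and `(φn)` in `L` with `|fn n| ≤ φn n` pointwise,
`Σ_n I (φn n) < ∞`, and `f x = Σ_n fn n x` at every point `x` where `Σ_n φn n x < ∞`;
and in that case `I¹ f = Σ_n I (fn n)`, the series converging absolutely. -/
theorem mikusinski_characterization (S : IntegralSystem X) (f : X → ℝ) :
    (Integrable1 S f ↔
      ∃ fn φn : ℕ → X → ℝ, (∀ n, fn n ∈ S.L) ∧ (∀ n, φn n ∈ S.L) ∧
        (∀ n x, |fn n x| ≤ φn n x) ∧ Summable (fun n => S.I (φn n)) ∧
        (∀ x, Summable (fun n => φn n x) → HasSum (fun n => fn n x) (f x))) ∧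
    (∀ fn φn : ℕ → X → ℝ, (∀ n, fn n ∈ S.L) → (∀ n, φn n ∈ S.L) →
      (∀ n x, |fn n x| ≤ φn n x) → Summable (fun n => S.I (φn n)) →
      (∀ x, Summable (fun n => φn n x) → HasSum (fun n => fn n x) (f x)) →
      Summable (fun n => |S.I (fn n)|) ∧ HasSum (fun n => S.I (fn n)) (Int1 S f)) := by
  refine ⟨⟨fun hf => ?_, ?_⟩, ?_⟩
  · obtain ⟨c, hc⟩ := IntegralSystem.integrable1_iff_exists_hasIntegral.1 hf
    obtain ⟨fn, φn, h⟩ := hc.exists_isMikusinskiSeries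
    exact ⟨fn, φn, h.mem, h.majorant_mem, h.abs_le_majorant, h.summable_I_majorant, h.hasSum⟩
  · rintro ⟨fn, φn, hfn, hφn, hle, hI, hsum⟩
    have h : S.IsMikusinskiSeries f fn φn := ⟨hfn, hφn, hle, hI, hsum⟩
    exact IntegralSystem.integrable1_iff_exists_hasIntegral.2 ⟨_, h.hasIntegral⟩
  · intro fn φn hfn hφn hle hI hsum
    have h : S.IsMikusinskiSeries f fn φn := ⟨hfn, hφn, hle, hI, hsum⟩
    rw [h.hasIntegral.int1_eq]
    exact ⟨h.summable_abs_I, h.summable_abs_I.of_abs.hasSum⟩
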